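/- Let G be a finite connected graph and let L be a list assignment for G such that |L(v)| > deg(v) for all v ∈ V(G). Then for every vertex v ∈ V(G) and every color c, there exists an L-coloring of G in which no vertex other than v is assigned the color c. -/

import Mathlib

def IsLColoring {V : Type*} (G : SimpleGraph V) (L : V → Finset ℕ) (φ : V → ℕ) : Prop :=
  (∀ v, φ v ∈ L v) ∧ ∀ ⦃u w : V⦄, G.Adj u w → φ u ≠ φ w

theorem stmt10 {V : Type*} [Fintype V] [DecidableEq V] (G : SimpleGraph V)
    [DecidableRel G.Adj] (hG : G.Connected) (L : V → Finset ℕ)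
    (hL : ∀ v, G.degree v < (L v).card) (v : V) (c : ℕ) :
    ∃ φ : V → ℕ, IsLColoring G L φ ∧ ∀ u : V, u ≠ v → φ u ≠ c := by
  have key : ∀ s : Finset V, ∃ φ : V → ℕ, (∀ u ∈ s, φ u ∈ L u) ∧
      (∀ u ∈ s, ∀ w ∈ s, G.Adj u w → φ u ≠ φ w) ∧ ∀ u ∈ s, u ≠ v → φ u ≠ c := by
    intro s
    induction s using Finset.induction_on_min_value (fun u => G.dist u v) with
    | empty => exact ⟨fun _ => 0, by simp, by simp, by simp⟩
    | insert a s ha hmin ih =>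
      obtain ⟨φ, h1, h2, h3⟩ := ih
      have hF : ∃ F : Finset ℕ, F.card ≤ G.degree a ∧ (∀ x ∈ s, G.Adj a x → φ x ∈ F) ∧
          (a ≠ v → c ∈ F) := by
        by_cases hav : a = v
        · refine ⟨(G.neighborFinset a).image φ, Finset.card_image_le, ?_, fun h => absurd hav h⟩
          intro x _ hx
          exact Finset.mem_image_of_mem _ (by simpa using hx)
        · obtain ⟨p, hp⟩ := hG.exists_walk_length_eq_dist a v
          cases p with
          | nil => exact absurd rfl hav
          | @cons _ w _ h p =>
            have hw : w ∉ s := by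
              intro hw
              have e1 := hmin w hw
              have e2 := SimpleGraph.dist_le p
              simp only [SimpleGraph.Walk.length_cons] at hp
              omega
            have hwN : w ∈ G.neighborFinset a := by simpa using h
            refine ⟨insert c (((G.neighborFinset a).erase w).image φ), ?_, ?_, by simp⟩
            · have e1 := Finset.card_insert_le c (((G.neighborFinset a).erase w).image φ)
              have e2 : (((G.neighborFinset a).erase w).image φ).card ≤ _ := Finset.card_image_le
              have e3 := Finset.card_erase_add_one hwN
              have e4 := G.card_neighborFinset_eq_degree a
              omega
            · intro x hx hax
              refine Finset.mem_insert_of_mem (Finset.mem_image_of_mem _ ?_)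
              refine Finset.mem_erase.2 ⟨?_, by simpa using hax⟩
              rintro rfl
              exact hw hx
      obtain ⟨F, f1, f2, f3⟩ := hF
      obtain ⟨k, hk, hkF⟩ := Finset.exists_mem_notMem_of_card_lt_card (f1.trans_lt (hL a))
      have hne : ∀ x ∈ s, x ≠ a := fun x hx h => ha (h ▸ hx)
      refine ⟨Function.update φ a k, ?_, ?_, ?_⟩
      · intro u hu
        rcases Finset.mem_insert.1 hu with rfl | hus
        · simpa using hk
        · simpa [hne u hus] using h1 u hus
      · intro u hu w hw huw
        rcases Finset.mem_insert.1 hu with rfl | hus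
        · rcases Finset.mem_insert.1 hw with rfl | hw
          · exact absurd huw (G.irrefl)
          · have := f2 w hw huw
            simp only [Function.update_self, Function.update_of_ne (hne w hw)]
            rintro rfl
            exact hkF this
        · rcases Finset.mem_insert.1 hw with rfl | hw
          · have := f2 u hus huw.symm
            simp only [Function.update_self, Function.update_of_ne (hne u hus)]
            rintro rfl
            exact hkF this
          · simpa [hne u hus, hne w hw] using h2 u hus w hw huw
      · intro u hu huv
        rcases Finset.mem_insert.1 hu with rfl | hus
        · simp only [Function.update_self]
          rintro rfl
          exact hkF (f3 huv)
        · simpa [hne u hus] using h3 u hus huv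
  obtain ⟨φ, h1, h2, h3⟩ := key Finset.univ
  exact ⟨φ, ⟨fun u => h1 u (Finset.mem_univ _),
    fun u w h => h2 u (Finset.mem_univ _) w (Finset.mem_univ _) h⟩,
    fun u => h3 u (Finset.mem_univ _)⟩
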